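/- Pullback estimate along the flow: Suppose the vector fields F and V are analytic on the torus 𝕋ⁿ. If b = σ⁻¹‖F‖_{r+λσ} ≤ 1/2 with 0 < σ < r and λ > 0, then the pullback of V under the time-t flow F_t of F satisfies ‖F_t^*V‖_{r−σ} ≤ (1 + bt)e^{1/λ}‖V‖_r for 0 ≤ t ≤ 1. -/

import Mathlib

/-!
The estimate reduces to a counting argument for the absolute values of the Fourier coefficients.

Expanding `V_m` gives a sum over modes `k₁, …, k_m` of `F` and `j` of `V`, the product of the
coefficients being multiplied by at most `∏ᵢ (|k₁| + ⋯ + |kᵢ| + |j|) ≤ x ^ m`, where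
`x = |k₁| + ⋯ + |k_m| + |j|` also bounds the size of the resulting mode. Hence all the loss of
derivatives is absorbed at once by the single scalar inequality
`x ^ m * e^{(r-σ)x} ≤ M * e^{rx}`, and `e^{rx}` factorises over the modes, so
`‖V_m‖_{r-σ} ≤ M * ‖F‖_r ^ m * ‖V‖_r` (`tsum_lieIter_le`).

For `m ≥ 1` one may take `M = m! / (2 σ ^ m)`, because `2 x ^ m / m! ≤ e^x`
(`two_mul_pow_div_factorial_le_exp`). The Lie series is then bounded by
`1 + (1/2) ∑_{m ≥ 1} (b t) ^ m ≤ 1 + b t` times `‖V‖_r`, as `b t ≤ 1 / 2`.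
This gives the claim, since `e^{1/λ} ≥ 1` and `‖F‖_r ≤ ‖F‖_{r+λσ}`.

All sums are taken in `ℝ≥0∞`: there the triangle inequality for `∑'` and the interchange of sums
hold unconditionally, so that convergence of the brackets never has to be discussed.
-/

open scoped BigOperators
noncomputable section

/-- The sum-norm `|k| = Σᵢ |kᵢ|` of an integer vector `k ∈ ℤⁿ`. -/
def znorm {n : ℕ} (k : Fin n → ℤ) : ℝ := ∑ i, |(k i : ℝ)|

/-- The weighted norm `‖P‖ₛ = Σ_k ‖p_k‖ e^{|k| s}` of a vector field on the torus
given by its Fourier coefficients `p : ℤⁿ → ℂⁿ` (max-norm on `ℂⁿ`). -/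
def wnorm {n : ℕ} (p : (Fin n → ℤ) → (Fin n → ℂ)) (s : ℝ) : ℝ :=
  ∑' k, ‖p k‖ * Real.exp (znorm k * s)

/-- Fourier coefficients of the directional derivative `DU·V`:
`(DU·V)_l = Σ_k i u_k ⟨k, v_{l−k}⟩`. -/
def dirDeriv {n : ℕ} (u v : (Fin n → ℤ) → (Fin n → ℂ)) : (Fin n → ℤ) → (Fin n → ℂ) :=
  fun l => ∑' k, (Complex.I * ∑ i, (k i : ℂ) * v (l - k) i) • u k

/-- Fourier coefficients of the Lie bracket `[U,V] = DV·U − DU·V`. -/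
def lieCoeff {n : ℕ} (u v : (Fin n → ℤ) → (Fin n → ℂ)) : (Fin n → ℤ) → (Fin n → ℂ) :=
  fun l => dirDeriv v u l - dirDeriv u v l

/-- Iterated Lie brackets: `V₀ = V`, `V_{m+1} = [V_m, F]`. -/
def lieIter {n : ℕ} (v f : (Fin n → ℤ) → (Fin n → ℂ)) : ℕ → (Fin n → ℤ) → (Fin n → ℂ)
  | 0 => v
  | m + 1 => lieCoeff (lieIter v f m) f

/-- Fourier coefficients of the pullback `F_t^*V = Σ_{m≥0} (t^m/m!) V_m` of `V`
under the time-`t` flow of `F`, given by the Lie series with `V₀ = V`, `V_m = [V_{m−1}, F]`. -/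
def flowPullbackCoeff {n : ℕ} (v f : (Fin n → ℤ) → (Fin n → ℂ)) (t : ℝ) :
    (Fin n → ℤ) → (Fin n → ℂ) :=
  fun l => ∑' m : ℕ, ((t : ℂ) ^ m / (Nat.factorial m : ℂ)) • lieIter v f m l

open scoped ENNReal

/-! ### Majorants of Lie brackets -/

section Estimates

variable {n : ℕ}

lemma znorm_nonneg (k : Fin n → ℤ) : 0 ≤ znorm k :=
  Finset.sum_nonneg fun _ _ => abs_nonneg _

lemma znorm_add_le (k j : Fin n → ℤ) : znorm (k + j) ≤ znorm k + znorm j := by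
  unfold znorm
  rw [← Finset.sum_add_distrib]
  refine Finset.sum_le_sum fun i _ => ?_
  simpa using abs_add_le (k i : ℝ) (j i : ℝ)

/-- Sum-norm and max-norm are dual: `|⟨k, x⟩| ≤ |k| ‖x‖`. -/
lemma enorm_pairing_le (k : Fin n → ℤ) (x : Fin n → ℂ) :
    ‖Complex.I * ∑ i, (k i : ℂ) * x i‖ₑ ≤ ENNReal.ofReal (znorm k) * ‖x‖ₑ := by
  rw [← ofReal_norm, ← ofReal_norm, ← ENNReal.ofReal_mul (znorm_nonneg k)]
  apply ENNReal.ofReal_le_ofReal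
  rw [norm_mul, Complex.norm_I, one_mul]
  refine (norm_sum_le _ _).trans ?_
  unfold znorm
  rw [Finset.sum_mul]
  refine Finset.sum_le_sum fun i _ => ?_
  rw [norm_mul, Complex.norm_intCast]
  exact mul_le_mul_of_nonneg_left (norm_le_pi_norm x i) (abs_nonneg _)

/-- A weighted sum of the coefficients of `DU·V` is at most the corresponding double sum over
the modes `k` of `U` and `j` of `V`, which interact in the mode `k + j`. -/
lemma tsum_dirDeriv_le (u v : (Fin n → ℤ) → (Fin n → ℂ)) (w : (Fin n → ℤ) → ℝ≥0∞) :
    ∑' l, ‖dirDeriv u v l‖ₑ * w l ≤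
      ∑' k, ∑' j, ENNReal.ofReal (znorm k) * (‖u k‖ₑ * ‖v j‖ₑ) * w (k + j) := by
  calc ∑' l, ‖dirDeriv u v l‖ₑ * w l
      ≤ ∑' l, ∑' k, ENNReal.ofReal (znorm k) * (‖u k‖ₑ * ‖v (l - k)‖ₑ) * w l := by
        refine ENNReal.tsum_le_tsum fun l => ?_
        rw [ENNReal.tsum_mul_right]
        gcongr
        refine enorm_tsum_le_tsum_enorm.trans (ENNReal.tsum_le_tsum fun k => ?_)
        rw [enorm_smul, mul_comm ‖u k‖ₑ, ← mul_assoc]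
        gcongr
        exact enorm_pairing_le k _
    _ = ∑' k, ∑' l, ENNReal.ofReal (znorm k) * (‖u k‖ₑ * ‖v (l - k)‖ₑ) * w l :=
        ENNReal.tsum_comm
    _ = _ := by
        refine tsum_congr fun k => ?_
        rw [← (Equiv.addLeft k).tsum_eq]
        simp

lemma tsum_lieCoeff_le (u v : (Fin n → ℤ) → (Fin n → ℂ)) (w : (Fin n → ℤ) → ℝ≥0∞) :
    ∑' l, ‖lieCoeff u v l‖ₑ * w l ≤
      ∑' k, ‖v k‖ₑ * ∑' j, ‖u j‖ₑ * (ENNReal.ofReal (znorm k + znorm j) * w (k + j)) := by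
  calc ∑' l, ‖lieCoeff u v l‖ₑ * w l
      ≤ ∑' l, (‖dirDeriv v u l‖ₑ * w l + ‖dirDeriv u v l‖ₑ * w l) := by
        refine ENNReal.tsum_le_tsum fun l => ?_
        rw [← add_mul]
        gcongr
        exact enorm_sub_le
    _ ≤ (∑' k, ∑' j, ENNReal.ofReal (znorm k) * (‖v k‖ₑ * ‖u j‖ₑ) * w (k + j)) +
          ∑' k, ∑' j, ENNReal.ofReal (znorm j) * (‖u j‖ₑ * ‖v k‖ₑ) * w (j + k) := by
        rw [ENNReal.tsum_add]
        refine add_le_add (tsum_dirDeriv_le v u w) ((tsum_dirDeriv_le u v w).trans ?_)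
        rw [ENNReal.tsum_comm]
    _ = _ := by
        rw [← ENNReal.tsum_add]
        refine tsum_congr fun k => ?_
        rw [← ENNReal.tsum_add, ← ENNReal.tsum_mul_left]
        refine tsum_congr fun j => ?_
        rw [ENNReal.ofReal_add (znorm_nonneg k) (znorm_nonneg j), add_comm j k]
        ring

/-- The iterated brackets, with all derivatives collected in the weight. The shift `P` and the
power `p` are the contributions of the modes of `F` already split off, so that the induction on
`m` closes; the scalar inequality with constant `M` is used only once, at the end, when no
bracket is left. -/
lemma tsum_lieIter_le (V F : (Fin n → ℤ) → (Fin n → ℂ)) {ρ r M : ℝ} (hρ : 0 ≤ ρ) (hM : 0 ≤ M)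
    (m : ℕ) : ∀ (p : ℕ) (P : ℝ), 0 ≤ P →
      (∀ x : ℝ, 0 ≤ x → x ^ (m + p) * Real.exp (x * ρ) ≤ M * Real.exp (x * r)) →
      ∑' l, ‖lieIter V F m l‖ₑ *
          ENNReal.ofReal ((P + znorm l) ^ p * Real.exp ((P + znorm l) * ρ)) ≤
        ENNReal.ofReal (M * Real.exp (P * r)) *
          ((∑' k, ‖F k‖ₑ * ENNReal.ofReal (Real.exp (znorm k * r))) ^ m *
            ∑' k, ‖V k‖ₑ * ENNReal.ofReal (Real.exp (znorm k * r))) := by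
  induction m with
  | zero =>
    intro p P hP hx
    rw [pow_zero, one_mul, ← ENNReal.tsum_mul_left]
    refine ENNReal.tsum_le_tsum fun l => ?_
    rw [mul_left_comm, ← ENNReal.ofReal_mul (by positivity)]
    refine mul_le_mul_right (ENNReal.ofReal_le_ofReal ?_) _
    have := hx (P + znorm l) (add_nonneg hP (znorm_nonneg l))
    rwa [zero_add, add_mul P _ r, Real.exp_add, ← mul_assoc] at this
  | succ m ih =>
    intro p P hP hx
    refine (tsum_lieCoeff_le _ _ _).trans ?_
    rw [pow_succ', mul_assoc, mul_left_comm, ← ENNReal.tsum_mul_right]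
    refine ENNReal.tsum_le_tsum fun k => ?_
    rw [mul_assoc]
    refine mul_le_mul_right ?_ _
    have hk := znorm_nonneg k
    have key := ih (p + 1) (P + znorm k) (add_nonneg hP hk)
      (fun x hx0 => by
        rw [show m + (p + 1) = m + 1 + p by ring]
        exact hx x hx0)
    rw [add_mul P _ r, Real.exp_add, ← mul_assoc M, mul_comm (M * Real.exp (P * r)),
      ENNReal.ofReal_mul (Real.exp_nonneg _), mul_assoc] at key
    refine (ENNReal.tsum_le_tsum fun j => ?_).trans key
    refine mul_le_mul_right ?_ _
    have hj := znorm_nonneg j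
    have hkj := znorm_nonneg (k + j)
    rw [← ENNReal.ofReal_mul (by positivity)]
    apply ENNReal.ofReal_le_ofReal
    have h : P + znorm (k + j) ≤ P + znorm k + znorm j := by linarith [znorm_add_le k j]
    rw [pow_succ', mul_assoc]
    gcongr
    linarith

/-! ### Trading derivatives for analyticity width -/

/-- Three consecutive terms of the exponential series suffice: the neighbours of `x ^ m / m!`
together are at least as large as that term. -/
lemma two_mul_pow_div_factorial_le_exp (m : ℕ) {x : ℝ} (hx : 0 ≤ x) :
    2 * (x ^ (m + 1) / (m + 1).factorial) ≤ Real.exp x := by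
  have h := Real.sum_le_exp_of_nonneg hx (m + 3)
  rw [Finset.sum_range_succ, Finset.sum_range_succ, Finset.sum_range_succ] at h
  have h0 : 0 ≤ ∑ i ∈ Finset.range m, x ^ i / (i.factorial : ℝ) :=
    Finset.sum_nonneg fun i _ => by positivity
  have h1 : x ^ (m + 1) / ((m + 1).factorial : ℝ) ≤
      x ^ m / (m.factorial : ℝ) + x ^ (m + 2) / ((m + 2).factorial : ℝ) := by
    have e1 : x ^ m / (m.factorial : ℝ) + x ^ (m + 2) / ((m + 2).factorial : ℝ) -
        x ^ (m + 1) / ((m + 1).factorial : ℝ) =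
        x ^ m / ((m + 2).factorial : ℝ) * ((m + 2) * (m + 1) + x ^ 2 - (m + 2) * x) := by
      have hf : (m.factorial : ℝ) ≠ 0 := by positivity
      simp only [Nat.factorial_succ, Nat.cast_mul, Nat.cast_add, Nat.cast_one]
      field_simp
      ring
    have e2 : 0 ≤ ((m : ℝ) + 2) * (m + 1) + x ^ 2 - (m + 2) * x := by
      have hm : (0 : ℝ) ≤ m := m.cast_nonneg
      -- the discriminant `(m + 2) ^ 2 - 4 (m + 2) (m + 1)` is negative
      nlinarith [sq_nonneg (x - ((m : ℝ) + 2) / 2), mul_nonneg hm hm]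
    have := mul_nonneg (by positivity : 0 ≤ x ^ m / ((m + 2).factorial : ℝ)) e2
    linarith
  linarith

/-- The loss of `m + 1` derivatives against a loss `σ` in the exponent. -/
lemma pow_mul_exp_le (m : ℕ) {r σ : ℝ} (hσ : 0 < σ) {x : ℝ} (hx : 0 ≤ x) :
    x ^ (m + 1) * Real.exp (x * (r - σ)) ≤
      ((m + 1).factorial / (2 * σ ^ (m + 1))) * Real.exp (x * r) := by
  have h := two_mul_pow_div_factorial_le_exp m (mul_nonneg hx hσ.le)
  have e : Real.exp (x * r) = Real.exp (x * σ) * Real.exp (x * (r - σ)) := by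
    rw [← Real.exp_add]
    ring_nf
  rw [e, ← mul_assoc]
  gcongr
  calc x ^ (m + 1) = ((m + 1).factorial / (2 * σ ^ (m + 1))) *
        (2 * ((x * σ) ^ (m + 1) / (m + 1).factorial)) := by
        rw [mul_pow]
        field_simp
    _ ≤ _ := by gcongr

/-! ### Weighted norms and the Lie series as extended nonnegative sums -/

lemma enorm_mul_ofReal_exp (x : Fin n → ℂ) (y : ℝ) :
    ‖x‖ₑ * ENNReal.ofReal (Real.exp y) = ENNReal.ofReal (‖x‖ * Real.exp y) := by
  rw [ENNReal.ofReal_mul (norm_nonneg _), ofReal_norm]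

/-- This holds without summability: a divergent sum is `0` on the left and `⊤` on the right. -/
lemma wnorm_eq_toReal (p : (Fin n → ℤ) → (Fin n → ℂ)) (s : ℝ) :
    wnorm p s = (∑' k, ‖p k‖ₑ * ENNReal.ofReal (Real.exp (znorm k * s))).toReal := by
  rw [ENNReal.tsum_toReal_eq fun k => by rw [enorm_mul_ofReal_exp]; exact ENNReal.ofReal_ne_top]
  refine tsum_congr fun k => ?_
  rw [enorm_mul_ofReal_exp, ENNReal.toReal_ofReal (by positivity)]

lemma ofReal_wnorm {p : (Fin n → ℤ) → (Fin n → ℂ)} {s : ℝ}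
    (h : Summable fun k => ‖p k‖ * Real.exp (znorm k * s)) :
    ∑' k, ‖p k‖ₑ * ENNReal.ofReal (Real.exp (znorm k * s)) = ENNReal.ofReal (wnorm p s) := by
  rw [wnorm, ENNReal.ofReal_tsum_of_nonneg (fun k => by positivity) h]
  exact tsum_congr fun k => enorm_mul_ofReal_exp _ _

lemma wnorm_nonneg (p : (Fin n → ℤ) → (Fin n → ℂ)) (s : ℝ) : 0 ≤ wnorm p s :=
  tsum_nonneg fun k => by positivity

lemma tsum_flowPullback_le (V F : (Fin n → ℤ) → (Fin n → ℂ)) {t : ℝ} (ht : 0 ≤ t)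
    (w : (Fin n → ℤ) → ℝ≥0∞) :
    ∑' l, ‖flowPullbackCoeff V F t l‖ₑ * w l ≤
      ∑' m : ℕ, ENNReal.ofReal (t ^ m / m.factorial) * ∑' l, ‖lieIter V F m l‖ₑ * w l := by
  calc ∑' l, ‖flowPullbackCoeff V F t l‖ₑ * w l
      ≤ ∑' l, ∑' m : ℕ, ENNReal.ofReal (t ^ m / m.factorial) * (‖lieIter V F m l‖ₑ * w l) := by
        refine ENNReal.tsum_le_tsum fun l => ?_
        simp_rw [← mul_assoc]
        rw [ENNReal.tsum_mul_right]
        gcongr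
        refine enorm_tsum_le_tsum_enorm.trans (ENNReal.tsum_le_tsum fun m => ?_)
        rw [enorm_smul]
        gcongr
        rw [← ofReal_norm]
        apply le_of_eq
        simp [abs_of_nonneg ht]
    _ = _ := by
        rw [ENNReal.tsum_comm]
        exact tsum_congr fun m => ENNReal.tsum_mul_left

end Estimates

/-! ### The pullback estimate -/

/-- **Pullback estimate along the flow.**
If `b = σ⁻¹‖F‖_{r+λσ} ≤ 1/2` with `0 < σ < r` and `λ > 0`, then
`‖F_t^*V‖_{r−σ} ≤ (1 + bt) e^{1/λ} ‖V‖_r` for `0 ≤ t ≤ 1`. -/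
theorem flow_pullback_estimate {n : ℕ}
    (V F : (Fin n → ℤ) → (Fin n → ℂ)) (r σ lam t : ℝ)
    (hσ0 : 0 < σ) (hσr : σ < r) (hlam : 0 < lam)
    (hV : Summable fun k => ‖V k‖ * Real.exp (znorm k * r))
    (hF : Summable fun k => ‖F k‖ * Real.exp (znorm k * (r + lam * σ)))
    (hb : σ⁻¹ * wnorm F (r + lam * σ) ≤ 1 / 2)
    (ht0 : 0 ≤ t) (ht1 : t ≤ 1) :
    wnorm (flowPullbackCoeff V F t) (r - σ) ≤
      (1 + σ⁻¹ * wnorm F (r + lam * σ) * t) * Real.exp (1 / lam) * wnorm V r := by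
  set A := wnorm F (r + lam * σ) with hA
  set B := wnorm V r with hB
  have hA0 : 0 ≤ A := wnorm_nonneg _ _
  have hB0 : 0 ≤ B := wnorm_nonneg _ _
  set b := σ⁻¹ * A with hbdef
  have hb0 : 0 ≤ b := by positivity
  have hFr : ∑' k, ‖F k‖ₑ * ENNReal.ofReal (Real.exp (znorm k * r)) ≤ ENNReal.ofReal A := by
    rw [hA, ← ofReal_wnorm hF]
    refine ENNReal.tsum_le_tsum fun k => ?_
    have := znorm_nonneg k
    gcongr
    nlinarith [mul_pos hlam hσ0]
  have hVr := ofReal_wnorm hV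
  have hzero : ∑' l, ‖lieIter V F 0 l‖ₑ * ENNReal.ofReal (Real.exp (znorm l * (r - σ))) ≤
      ENNReal.ofReal B := by
    rw [hB, ← hVr]
    refine ENNReal.tsum_le_tsum fun k => ?_
    have := znorm_nonneg k
    change ‖V k‖ₑ * _ ≤ _
    gcongr
    linarith
  have hsucc : ∀ m : ℕ, ENNReal.ofReal (t ^ (m + 1) / (m + 1).factorial) *
      ∑' l, ‖lieIter V F (m + 1) l‖ₑ * ENNReal.ofReal (Real.exp (znorm l * (r - σ))) ≤
      ENNReal.ofReal (b * t * B / 2 * (b * t) ^ m) := by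
    intro m
    have h := tsum_lieIter_le V F (ρ := r - σ) (r := r)
      (M := (m + 1).factorial / (2 * σ ^ (m + 1))) (by linarith) (by positivity) (m + 1) 0 0 le_rfl
      (fun x hx => pow_mul_exp_le m hσ0 hx)
    simp only [zero_add, pow_zero, one_mul, zero_mul, Real.exp_zero, mul_one] at h
    refine (mul_le_mul_right h _).trans ?_
    rw [hVr]
    refine (mul_le_mul_right (mul_le_mul_right (mul_le_mul_left
      (pow_le_pow_left' hFr (m + 1)) _) _) _).trans (le_of_eq ?_)
    rw [← ENNReal.ofReal_pow hA0, ← ENNReal.ofReal_mul (by positivity),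
      ← ENNReal.ofReal_mul (by positivity), ← ENNReal.ofReal_mul (by positivity)]
    congr 1
    rw [show b * t * B / 2 * (b * t) ^ m = (b * t) ^ (m + 1) * B / 2 by ring, hbdef, mul_pow,
      mul_pow, inv_pow, hB]
    field_simp
  have hbt : b * t ≤ 1 / 2 := by nlinarith
  have hbt0 : 0 ≤ b * t := by positivity
  have hgeo : HasSum (fun m : ℕ => b * t * B / 2 * (b * t) ^ m)
      (b * t * B / 2 * (1 - b * t)⁻¹) :=
    (hasSum_geometric_of_lt_one hbt0 (by linarith)).mul_left _
  have hinv : (1 - b * t)⁻¹ ≤ 2 := by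
    rw [inv_le_comm₀ (by linarith) (by norm_num)]
    linarith
  have hmain : ∑' l, ‖flowPullbackCoeff V F t l‖ₑ *
      ENNReal.ofReal (Real.exp (znorm l * (r - σ))) ≤ ENNReal.ofReal ((1 + b * t) * B) := by
    refine (tsum_flowPullback_le V F ht0 _).trans ?_
    rw [tsum_eq_zero_add' ENNReal.summable]
    refine (add_le_add (b := ENNReal.ofReal B) ?_ (ENNReal.tsum_le_tsum hsucc)).trans ?_
    · simpa using hzero
    · rw [← ENNReal.ofReal_tsum_of_nonneg (fun m => by positivity) hgeo.summable, hgeo.tsum_eq,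
        ← ENNReal.ofReal_add hB0
          (mul_nonneg (by positivity) (inv_nonneg.2 (by linarith)))]
      apply ENNReal.ofReal_le_ofReal
      have := mul_le_mul_of_nonneg_left hinv (by positivity : 0 ≤ b * t * B / 2)
      linarith
  rw [wnorm_eq_toReal]
  refine (ENNReal.toReal_le_of_le_ofReal (by positivity) hmain).trans ?_
  have hexp : 1 ≤ Real.exp (1 / lam) := Real.one_le_exp (by positivity)
  gcongr
  exact le_mul_of_one_le_right (by positivity) hexp
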